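/- Let θ : ℝⁿ → [−∞,+∞] be symmetric and locally Lipschitz continuous relative to its domain, let g = θ∘λ be lower semicontinuous and prox-bounded, let (X,Y) ∈ gph ∂g, and assume g is prox-regular and subdifferentially continuous at X. Let y ∈ ∂θ(λ(X)) and U ∈ Oⁿ(X) be such that Y = U·Diag(y)·Uᵀ. Then the following are equivalent: (a) for every sufficiently small γ > 0, the proximal mapping prox_{γg} is single-valued on a neighborhood of X + γY and directionally differentiable at X + γY; (b) for every sufficiently small γ > 0, the proximal mapping prox_{γθ} is single-valued on a neighborhood of λ(X) + γy and directionally differentiable at λ(X) + γy. -/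

import Mathlib

open Filter Topology Matrix

noncomputable section

namespace SpecPaper

/-! ## Generic variational analysis definitions over a topological real vector space -/

variable {E : Type*}

section Generic

variable [AddCommGroup E] [Module ℝ E] [TopologicalSpace E]

/-- `f x` is finite (neither `+∞` nor `-∞`). -/
def IsFiniteAt (f : E → EReal) (x : E) : Prop :=
  f x ≠ ⊤ ∧ f x ≠ ⊥

/-- The norm induced by a given inner product. -/
noncomputable def nrm (ip : E → E → ℝ) (x : E) : ℝ :=
  Real.sqrt (ip x x)

/-- The subderivative `df(x)(w)`. -/
noncomputable def subderiv (f : E → EReal) (x w : E) : EReal :=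
  Filter.liminf (fun p : ℝ × E => (((p.1)⁻¹ : ℝ) : EReal) * (f (x + p.1 • p.2) - f x))
    ((nhdsWithin (0 : ℝ) (Set.Ioi 0)) ×ˢ nhds w)

/-- The second-order difference quotient `Δ²ₜ f(x,v)(w)`. -/
noncomputable def sdq2 (ip : E → E → ℝ) (f : E → EReal) (x v : E) (t : ℝ) (w : E) : EReal :=
  (((2 / t ^ 2) : ℝ) : EReal) * (f (x + t • w) - f x - ((t * ip v w : ℝ) : EReal))

/-- The second subderivative `d²f(x,v)(w)`. -/
noncomputable def subderiv2 (ip : E → E → ℝ) (f : E → EReal) (x v w : E) : EReal :=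
  Filter.liminf (fun p : ℝ × E => sdq2 ip f x v p.1 p.2)
    ((nhdsWithin (0 : ℝ) (Set.Ioi 0)) ×ˢ nhds w)

/-- Twice epi-differentiability of `f` at `x` for `v`. -/
def TwiceEpiDiff (ip : E → E → ℝ) (f : E → EReal) (x v : E) : Prop :=
  IsFiniteAt f x ∧
    ∀ t : ℕ → ℝ, (∀ k, 0 < t k) → Tendsto t atTop (nhds 0) →
      ∀ w : E, ∃ ws : ℕ → E, Tendsto ws atTop (nhds w) ∧
        Tendsto (fun k => sdq2 ip f x v (t k) (ws k)) atTop (nhds (subderiv2 ip f x v w))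

/-- `v` is a regular subgradient of `f` at `x`. -/
def RegSubgrad (ip : E → E → ℝ) (f : E → EReal) (x v : E) : Prop :=
  IsFiniteAt f x ∧
    (0 : EReal) ≤ Filter.liminf
      (fun y : E =>
        (((nrm ip (y - x))⁻¹ : ℝ) : EReal) * (f y - f x - ((ip v (y - x) : ℝ) : EReal)))
      (nhdsWithin x {x}ᶜ)

/-- `v` is a (limiting) subgradient of `f` at `x`. -/
def LimSubgrad (ip : E → E → ℝ) (f : E → EReal) (x v : E) : Prop :=
  ∃ xs vs : ℕ → E, (∀ k, RegSubgrad ip f (xs k) (vs k)) ∧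
    Tendsto xs atTop (nhds x) ∧ Tendsto vs atTop (nhds v) ∧
    Tendsto (fun k => f (xs k)) atTop (nhds (f x))

/-- The tangent cone to `C` at `x`. -/
def tangentCone (C : Set E) (x : E) : Set E :=
  {w | ∃ (t : ℕ → ℝ) (ws : ℕ → E), (∀ k, 0 < t k) ∧ Tendsto t atTop (nhds 0) ∧
    Tendsto ws atTop (nhds w) ∧ ∀ k, x + t k • ws k ∈ C}

/-- The regular normal cone to `C` at `x`. -/
def regNormalCone (ip : E → E → ℝ) (C : Set E) (x : E) : Set E :=
  {v | ∀ w ∈ tangentCone C x, ip v w ≤ 0}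

/-- The limiting normal cone to `C` at `x`. -/
def limNormalCone (ip : E → E → ℝ) (C : Set E) (x : E) : Set E :=
  {v | ∃ xs vs : ℕ → E, (∀ k, xs k ∈ C) ∧ (∀ k, vs k ∈ regNormalCone ip C (xs k)) ∧
    Tendsto xs atTop (nhds x) ∧ Tendsto vs atTop (nhds v)}

/-- The critical cone `C_f(x,v)`. -/
def criticalCone (ip : E → E → ℝ) (f : E → EReal) (x v : E) : Set E :=
  {w | subderiv f x w = ((ip v w : ℝ) : EReal)}

/-- `f` is locally Lipschitz continuous at `x` relative to its domain. -/
def LocLipAtRelDom (ip : E → E → ℝ) (f : E → EReal) (x : E) : Prop :=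
  IsFiniteAt f x ∧
    ∃ V ∈ nhds x, ∃ ℓ : ℝ, 0 ≤ ℓ ∧
      ∀ a ∈ V, ∀ b ∈ V, f a ≠ ⊤ → f b ≠ ⊤ →
        f a ≠ ⊥ ∧ f b ≠ ⊥ ∧ |(f a).toReal - (f b).toReal| ≤ ℓ * nrm ip (a - b)

/-- `f` is locally Lipschitz continuous relative to its domain. -/
def LocLipRelDom (ip : E → E → ℝ) (f : E → EReal) : Prop :=
  ∀ x : E, f x ≠ ⊤ → LocLipAtRelDom ip f x

/-- `v` is a proximal subgradient of `f` at `x`. -/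
def ProxSubgrad (ip : E → E → ℝ) (f : E → EReal) (x v : E) : Prop :=
  IsFiniteAt f x ∧
    ∃ r > (0 : ℝ), ∃ ε > (0 : ℝ), ∀ x' : E, nrm ip (x' - x) ≤ ε →
      f x + ((ip v (x' - x) - r / 2 * ip (x' - x) (x' - x) : ℝ) : EReal) ≤ f x'

/-- `f` is prox-regular at `x` for `v`. -/
def ProxRegularAtFor (ip : E → E → ℝ) (f : E → EReal) (x v : E) : Prop :=
  IsFiniteAt f x ∧
    (∃ δ > (0 : ℝ), LowerSemicontinuousOn f {x' | nrm ip (x' - x) < δ}) ∧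
    ∃ ε > (0 : ℝ), ∃ r : ℝ, 0 ≤ r ∧
      ∀ x₁ v₁ : E, LimSubgrad ip f x₁ v₁ → nrm ip (x₁ - x) < ε → nrm ip (v₁ - v) < ε →
        f x₁ < f x + (ε : EReal) →
        ∀ x' : E, nrm ip (x' - x) < ε →
          f x₁ + ((ip v₁ (x' - x₁) - r / 2 * ip (x' - x₁) (x' - x₁) : ℝ) : EReal) ≤ f x'

/-- `f` is prox-regular at `x` (for every subgradient). -/
def ProxRegularAt (ip : E → E → ℝ) (f : E → EReal) (x : E) : Prop :=
  ∀ v : E, LimSubgrad ip f x v → ProxRegularAtFor ip f x v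

/-- `f` is subdifferentially continuous at `x`. -/
def SubdiffContAt (ip : E → E → ℝ) (f : E → EReal) (x : E) : Prop :=
  ∀ v : E, LimSubgrad ip f x v →
    ∀ xs vs : ℕ → E, (∀ k, LimSubgrad ip f (xs k) (vs k)) →
      Tendsto xs atTop (nhds x) → Tendsto vs atTop (nhds v) →
      Tendsto (fun k => f (xs k)) atTop (nhds (f x))

/-- `f` is prox-bounded. -/
def ProxBounded (ip : E → E → ℝ) (f : E → EReal) : Prop :=
  ∃ α c : ℝ, ∀ x : E, (c : EReal) ≤ f x + ((α * ip x x : ℝ) : EReal)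

/-- The proximal mapping (as a set of minimizers). -/
def proxSet (ip : E → E → ℝ) (f : E → EReal) (γ : ℝ) (x : E) : Set E :=
  {w | ∀ w' : E,
    f w + ((1 / (2 * γ) * ip (w - x) (w - x) : ℝ) : EReal) ≤
      f w' + ((1 / (2 * γ) * ip (w' - x) (w' - x) : ℝ) : EReal)}

/-- The proximal map of `f` with parameter `γ` is single-valued around `z` and the resulting
map is directionally differentiable at `z`. -/
def ProxSingleDirDiff (ip : E → E → ℝ) (f : E → EReal) (γ : ℝ) (z : E) : Prop :=
  ∃ V ∈ nhds z, ∃ P : E → E, (∀ u ∈ V, proxSet ip f γ u = {P u}) ∧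
    ∀ h : E, ∃ L : E,
      Tendsto (fun t : ℝ => t⁻¹ • (P (z + t • h) - P z)) (nhdsWithin 0 (Set.Ioi 0)) (nhds L)

/-- The parabolic difference quotient. -/
noncomputable def parabQuot (f : E → EReal) (x w : E) (t : ℝ) (z : E) : EReal :=
  (((2 / t ^ 2) : ℝ) : EReal) *
    (f (x + t • w + (t ^ 2 / 2) • z) - f x - ((t * (subderiv f x w).toReal : ℝ) : EReal))

/-- The parabolic subderivative `d²f(x)(w | z)`. -/
noncomputable def parabSubderiv (f : E → EReal) (x w z : E) : EReal :=
  Filter.liminf (fun p : ℝ × E => parabQuot f x w p.1 p.2)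
    ((nhdsWithin (0 : ℝ) (Set.Ioi 0)) ×ˢ nhds z)

/-- `f` is parabolically epi-differentiable at `x` for `w`. -/
def ParabEpiDiff (f : E → EReal) (x w : E) : Prop :=
  (∃ z : E, parabSubderiv f x w z < ⊤) ∧
    ∀ t : ℕ → ℝ, (∀ k, 0 < t k) → Tendsto t atTop (nhds 0) →
      ∀ z : E, ∃ zs : ℕ → E, Tendsto zs atTop (nhds z) ∧
        Tendsto (fun k => parabQuot f x w (t k) (zs k)) atTop (nhds (parabSubderiv f x w z))

/-- `φ` is a generalized quadratic form: its domain is a linear subspace and on the domain it is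
given by a symmetric linear operator. -/
def IsGQF (ip : E → E → ℝ) (φ : E → EReal) : Prop :=
  (φ 0 ≠ ⊤) ∧
  (∀ x y : E, φ x ≠ ⊤ → φ y ≠ ⊤ → φ (x + y) ≠ ⊤) ∧
  (∀ (c : ℝ) (x : E), φ x ≠ ⊤ → φ (c • x) ≠ ⊤) ∧
  ∃ L : E → E,
    (∀ x y : E, φ x ≠ ⊤ → φ y ≠ ⊤ → L (x + y) = L x + L y) ∧
    (∀ (c : ℝ) (x : E), φ x ≠ ⊤ → L (c • x) = c • L x) ∧
    (∀ x y : E, φ x ≠ ⊤ → φ y ≠ ⊤ → ip (L x) y = ip x (L y)) ∧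
    (∀ x : E, φ x ≠ ⊤ → φ x = ((ip (L x) x : ℝ) : EReal))

/-- `f` is generalized twice differentiable at `x` for `v`. -/
def GenTwiceDiff (ip : E → E → ℝ) (f : E → EReal) (x v : E) : Prop :=
  TwiceEpiDiff ip f x v ∧ IsGQF ip (subderiv2 ip f x v)

/-- Proto-differentiability of a set-valued map `F` at `x` for `y ∈ F x`. -/
def ProtoDiff (F : E → Set E) (x y : E) : Prop :=
  ∀ w η : E, (w, η) ∈ tangentCone {p : E × E | p.2 ∈ F p.1} (x, y) →
    ∀ t : ℕ → ℝ, (∀ k, 0 < t k) → Tendsto t atTop (nhds 0) →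
      ∃ ws ηs : ℕ → E, Tendsto ws atTop (nhds w) ∧ Tendsto ηs atTop (nhds η) ∧
        ∀ k, y + t k • ηs k ∈ F (x + t k • ws k)

/-- Relative interior of a set (interior relative to its affine hull). -/
def relInterior (C : Set E) : Set E :=
  {y | y ∈ C ∧ ∃ V ∈ nhds y, ∀ z ∈ V, z ∈ affineSpan ℝ C → z ∈ C}

/-- A polyhedral set: the intersection of finitely many closed half-spaces. -/
def IsPolyhedral (ip : E → E → ℝ) (C : Set E) : Prop :=
  ∃ (k : ℕ) (a : Fin k → E) (b : Fin k → ℝ), C = {x | ∀ j : Fin k, ip (a j) x ≤ b j}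

/-- The subdifferential of a convex function. -/
def convexSubdiff (ip : E → E → ℝ) (f : E → EReal) (x : E) : Set E :=
  {v | ∀ z : E, f x + ((ip v (z - x) : ℝ) : EReal) ≤ f z}

/-- The natural inner product on `E × ℝ`. -/
def ipProd (ip : E → E → ℝ) : E × ℝ → E × ℝ → ℝ :=
  fun p q => ip p.1 q.1 + p.2 * q.2

/-- The epigraph of `f`. -/
def epiSet (f : E → EReal) : Set (E × ℝ) :=
  {p | f p.1 ≤ (p.2 : EReal)}

/-- `f` is subdifferentially regular at `x`. -/
def SubdiffRegularAt (ip : E → E → ℝ) (f : E → EReal) (x : E) : Prop :=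
  IsFiniteAt f x ∧
    regNormalCone (ipProd ip) (epiSet f) (x, (f x).toReal) =
      limNormalCone (ipProd ip) (epiSet f) (x, (f x).toReal)

/-! Real-valued versions: semidifferentiability, gradients. -/

/-- `f` is semidifferentiable at `x`. -/
def SemiDiffAt (f : E → ℝ) (x : E) : Prop :=
  ∀ w : E, ∃ d : ℝ,
    Tendsto (fun p : ℝ × E => (p.1)⁻¹ * (f (x + p.1 • p.2) - f x))
      ((nhdsWithin (0 : ℝ) (Set.Ioi 0)) ×ˢ nhds w) (nhds d)

/-- The (real value of the) subderivative of a real-valued function. -/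
noncomputable def dReal (f : E → ℝ) (x w : E) : ℝ :=
  (subderiv (fun y => ((f y : ℝ) : EReal)) x w).toReal

/-- The second-order difference quotient built from the subderivative. -/
noncomputable def sdq2R (f : E → ℝ) (x : E) (t : ℝ) (w : E) : ℝ :=
  (2 / t ^ 2) * (f (x + t • w) - f x - t * dReal f x w)

/-- `f` is twice semidifferentiable at `x`. -/
def TwiceSemiDiffAt (f : E → ℝ) (x : E) : Prop :=
  SemiDiffAt f x ∧
    ∀ w : E, ∃ d : ℝ,
      Tendsto (fun p : ℝ × E => sdq2R f x p.1 p.2)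
        ((nhdsWithin (0 : ℝ) (Set.Ioi 0)) ×ˢ nhds w) (nhds d)

/-- The second semiderivative `d²f(x)(w)` (the liminf; it is the full limit whenever `f` is
twice semidifferentiable at `x`). -/
noncomputable def secondSemiDeriv (f : E → ℝ) (x w : E) : EReal :=
  Filter.liminf (fun p : ℝ × E => ((sdq2R f x p.1 p.2 : ℝ) : EReal))
    ((nhdsWithin (0 : ℝ) (Set.Ioi 0)) ×ˢ nhds w)

/-- `f` is (Fréchet) differentiable at `x` with gradient `g` (w.r.t. inner product `ip`). -/
def HasGradAt (ip : E → E → ℝ) (f : E → ℝ) (x g : E) : Prop :=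
  Tendsto (fun y : E => (nrm ip (y - x))⁻¹ * (f y - f x - ip g (y - x)))
    (nhdsWithin x {x}ᶜ) (nhds 0)

/-- `f` is locally Lipschitz continuous around `x`. -/
def LocLipAt (ip : E → E → ℝ) (f : E → ℝ) (x : E) : Prop :=
  ∃ V ∈ nhds x, ∃ ℓ : ℝ, 0 ≤ ℓ ∧ ∀ a ∈ V, ∀ b ∈ V, |f a - f b| ≤ ℓ * nrm ip (a - b)

/-- `f` is twice differentiable at `x` with gradient map `G` near `x` and second derivative
(the derivative of `G` at `x`) given by the linear map `Dxx`. -/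
def HasSecondDerivAt (ip : E → E → ℝ) (f : E → EReal) (x : E) (G : E → E) (Dxx : E → E) :
    Prop :=
  ∃ V ∈ nhds x, ∃ fr : E → ℝ,
    (∀ z ∈ V, f z = ((fr z : ℝ) : EReal)) ∧
    (∀ z ∈ V, HasGradAt ip fr z (G z)) ∧
    IsLinearMap ℝ Dxx ∧
    Tendsto (fun z : E => (nrm ip (z - x))⁻¹ • (G z - G x - Dxx (z - x)))
      (nhdsWithin x {x}ᶜ) (nhds 0)

/-- `f` is twice differentiable at `x`. -/
def TwiceDiffAt (ip : E → E → ℝ) (f : E → EReal) (x : E) : Prop :=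
  ∃ G Dxx : E → E, HasSecondDerivAt ip f x G Dxx

end Generic

/-! ## Eigenvalues and spectral machinery -/

open scoped Classical in
/-- The eigenvalues of a real symmetric matrix, arranged in nonincreasing order
(junk value `0` if the matrix is not symmetric). -/
noncomputable def eigval {n : ℕ} (X : Matrix (Fin n) (Fin n) ℝ) : Fin n → ℝ :=
  if h : X.IsHermitian then
    fun i => h.eigenvalues (Tuple.sort (fun j => -h.eigenvalues j) i)
  else 0

/-- `Oⁿ(X)`: orthogonal matrices realizing the ordered spectral decomposition of `X`. -/
def eigOrth {n : ℕ} (X : Matrix (Fin n) (Fin n) ℝ) : Set (Matrix (Fin n) (Fin n) ℝ) :=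
  {U | U * Uᵀ = 1 ∧ X = U * Matrix.diagonal (eigval X) * Uᵀ}

open scoped Classical in
/-- The block `α_m` of indices `j` whose eigenvalue `λ_j(X)` equals `λ_i(X)`. -/
noncomputable def blockSet {n : ℕ} (X : Matrix (Fin n) (Fin n) ℝ) (i : Fin n) :
    Finset (Fin n) :=
  Finset.univ.filter fun j => eigval X j = eigval X i

lemma mem_blockSet_self {n : ℕ} (X : Matrix (Fin n) (Fin n) ℝ) (i : Fin n) :
    i ∈ blockSet X i := by
  simp [blockSet]

/-- The increasing enumeration of the block of `i`. -/
noncomputable def blockEmb {n : ℕ} (X : Matrix (Fin n) (Fin n) ℝ) (i : Fin n) :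
    Fin (blockSet X i).card → Fin n :=
  fun a => ((blockSet X i).orderIsoOfFin rfl a : Fin n)

/-- The position of `i` inside its own block. -/
noncomputable def blockIdx {n : ℕ} (X : Matrix (Fin n) (Fin n) ℝ) (i : Fin n) :
    Fin (blockSet X i).card :=
  ((blockSet X i).orderIsoOfFin rfl).symm ⟨i, mem_blockSet_self X i⟩

/-- The principal submatrix of `M` corresponding to the block of `i` (for `X`). -/
noncomputable def blockMat {n : ℕ} (X M : Matrix (Fin n) (Fin n) ℝ) (i : Fin n) :
    Matrix (Fin (blockSet X i).card) (Fin (blockSet X i).card) ℝ :=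
  Matrix.of fun a b => M (blockEmb X i a) (blockEmb X i b)

/-- The directional derivative `λ'(X;H)` of the ordered eigenvalue map, computed through
`U ∈ Oⁿ(X)`: blockwise ordered eigenvalues of `U_{α_m}ᵀ H U_{α_m}`. -/
noncomputable def lambdaDir {n : ℕ} (X U H : Matrix (Fin n) (Fin n) ℝ) : Fin n → ℝ :=
  fun i => eigval (blockMat X (Uᵀ * H * U) i) (blockIdx X i)

open scoped Classical in
/-- The Moore–Penrose pseudoinverse of a square real matrix, characterized by the four
Penrose equations. -/
noncomputable def pinv {n : ℕ} (A : Matrix (Fin n) (Fin n) ℝ) :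
    Matrix (Fin n) (Fin n) ℝ :=
  if h : ∃ B : Matrix (Fin n) (Fin n) ℝ,
      A * B * A = A ∧ B * A * B = B ∧ (A * B)ᵀ = A * B ∧ (B * A)ᵀ = B * A
  then h.choose else 0

/-- The curvature term `2 ∑ₘ ⟨Diag(y)_{αₘαₘ}, U_{αₘ}ᵀ H (μₘ I - X)† H U_{αₘ}⟩`, written as a
single sum over all indices. -/
noncomputable def curvTerm {n : ℕ} (X U H : Matrix (Fin n) (Fin n) ℝ) (y : Fin n → ℝ) : ℝ :=
  2 * ∑ i : Fin n, y i *
    (Uᵀ * (H * pinv (eigval X i • (1 : Matrix (Fin n) (Fin n) ℝ) - X) * H) * U) i i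

/-- Two symmetric matrices admit a simultaneous ordered spectral decomposition. -/
def simOrdSpec {k : ℕ} (A B : Matrix (Fin k) (Fin k) ℝ) : Prop :=
  ∃ P : Matrix (Fin k) (Fin k) ℝ, P * Pᵀ = 1 ∧
    A = P * Matrix.diagonal (eigval A) * Pᵀ ∧
    B = P * Matrix.diagonal (eigval B) * Pᵀ

/-- The subspace of symmetric `n × n` real matrices. -/
def symSubmodule (n : ℕ) : Submodule ℝ (Matrix (Fin n) (Fin n) ℝ) where
  carrier := {A | A.IsSymm}
  add_mem' := by
    intro a b ha hb
    simp only [Set.mem_setOf_eq, Matrix.IsSymm] at *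
    rw [Matrix.transpose_add, ha, hb]
  zero_mem' := by
    simp only [Set.mem_setOf_eq, Matrix.IsSymm, Matrix.transpose_zero]
  smul_mem' := by
    intro c a ha
    simp only [Set.mem_setOf_eq, Matrix.IsSymm] at *
    rw [Matrix.transpose_smul, ha]

/-- The space `Sⁿ` of symmetric `n × n` real matrices. -/
abbrev Sym (n : ℕ) : Type := ↥(symSubmodule n)

/-- The trace inner product `⟨A, B⟩ = tr(AB)` on `Sⁿ`. -/
noncomputable def ipM {n : ℕ} (A B : Sym n) : ℝ :=
  ((A : Matrix (Fin n) (Fin n) ℝ) * (B : Matrix (Fin n) (Fin n) ℝ)).trace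

/-- The Euclidean inner product on `ℝⁿ`. -/
def ipV {n : ℕ} (v w : Fin n → ℝ) : ℝ :=
  ∑ i, v i * w i

/-- The spectral function `g = θ ∘ λ` on `Sⁿ`. -/
noncomputable def specFn {n : ℕ} (θ : (Fin n → ℝ) → EReal) : Sym n → EReal :=
  fun A => θ (eigval (A : Matrix (Fin n) (Fin n) ℝ))

/-- A function on `ℝⁿ` is symmetric (permutation invariant). -/
def SymmetricFn {n : ℕ} {α : Type*} (θ : (Fin n → ℝ) → α) : Prop :=
  ∀ (x : Fin n → ℝ) (σ : Equiv.Perm (Fin n)), θ (fun i => x (σ i)) = θ x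

/-- The diagonal matrix `Diag(w)` as an element of `Sⁿ`. -/
noncomputable def diagSym {n : ℕ} (w : Fin n → ℝ) : Sym n :=
  ⟨Matrix.diagonal w, Matrix.isSymm_diagonal w⟩

/-- The `i`-th order statistic: `orderStat x i` is the `i`-th largest entry of `x`. -/
noncomputable def orderStat {n : ℕ} (x : Fin n → ℝ) : Fin n → ℝ :=
  fun i => x (Tuple.sort (fun j => -x j) i)



section GenericProx

/-- Basic inequality form of an EReal comparison with real shifts. -/
lemma ereal_add_le_iff {a b : EReal} {s t : ℝ} {a' : ℝ} (ha : a = (a' : EReal)) :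
    a + (s : EReal) ≤ b + (t : EReal) ↔ a + ((s - t : ℝ) : EReal) ≤ b := by
  subst ha
  induction b using EReal.rec with
  | bot =>
    rw [EReal.bot_add]
    simp only [le_bot_iff]
    constructor <;> intro h <;> exact absurd h (by norm_cast)
  | coe b =>
    norm_cast
    constructor <;> intro h <;> linarith
  | top => simp

variable {G : Type*} [AddCommGroup G] [Module ℝ G] [TopologicalSpace G]
  {F : Type*} [NormedAddCommGroup F] [InnerProductSpace ℝ F]
  {ip : G → G → ℝ} {ι : G →ₗ[ℝ] F}

lemma nrm_eq (hip : ∀ a b, ip a b = inner ℝ (ι a) (ι b)) (a : G) : nrm ip a = ‖ι a‖ := by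
  unfold nrm
  rw [hip, real_inner_self_eq_norm_sq, Real.sqrt_sq (norm_nonneg _)]

lemma ip_self (hip : ∀ a b, ip a b = inner ℝ (ι a) (ι b)) (a : G) : ip a a = ‖ι a‖ ^ 2 := by
  rw [hip, real_inner_self_eq_norm_sq]

lemma proxBounded_ne_bot {f : G → EReal} (h : ProxBounded ip f) (x : G) : f x ≠ ⊥ := by
  obtain ⟨α, c, h⟩ := h
  intro hx
  have := h x
  rw [hx, EReal.bot_add, le_bot_iff] at this
  exact EReal.coe_ne_bot _ this

/-- A global quadratic minorant. -/
lemma global_minorant (hip : ∀ a b, ip a b = inner ℝ (ι a) (ι b)) {f : G → EReal} {x v : G}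
    (hpb : ProxBounded ip f) {fx : ℝ} (hfx : f x = (fx : EReal)) {ε r : ℝ} (hε : 0 < ε)
    (hr : 0 ≤ r)
    (hloc : ∀ x' : G, nrm ip (x' - x) < ε →
          f x + ((ip v (x' - x) - r / 2 * ip (x' - x) (x' - x) : ℝ) : EReal) ≤ f x') :
    ∃ R : ℝ, r ≤ R ∧ ∀ w : G,
      ((fx + inner ℝ (ι v) (ι w - ι x) - R / 2 * ‖ι w - ι x‖ ^ 2 : ℝ) : EReal) ≤ f w := by
  obtain ⟨α, c, hpb⟩ := hpb
  set A : ℝ := |fx| + |c| + 2 * |α| * ‖ι x‖ ^ 2 with hA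
  have hA0 : 0 ≤ A := by positivity
  refine ⟨2 * (A / ε ^ 2 + ‖ι v‖ / ε + 2 * |α|) + r, by
    have : 0 ≤ 2 * (A / ε ^ 2 + ‖ι v‖ / ε + 2 * |α|) := by positivity
    linarith, fun w => ?_⟩
  set R' : ℝ := A / ε ^ 2 + ‖ι v‖ / ε + 2 * |α| with hR'
  have hR0 : 0 ≤ R' := by positivity
  by_cases hw : nrm ip (w - x) < ε
  · refine le_trans ?_ (hloc w hw)
    rw [hfx, ip_self hip, hip, map_sub]
    norm_cast
    nlinarith [mul_nonneg hR0 (sq_nonneg ‖ι w - ι x‖)]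
  · rw [nrm_eq hip, map_sub, not_lt] at hw
    have h1 := hpb w
    rw [ip_self hip] at h1
    have key : fx + inner ℝ (ι v) (ι w - ι x) - (2 * R' + r) / 2 * ‖ι w - ι x‖ ^ 2
        ≤ c - α * ‖ι w‖ ^ 2 := by
      set s := ‖ι w - ι x‖ with hs
      have hs0 : 0 ≤ s := norm_nonneg _
      have e1 : inner ℝ (ι v) (ι w - ι x) ≤ ‖ι v‖ * s := real_inner_le_norm _ _
      have e2 : ‖ι w‖ ≤ ‖ι x‖ + s := by
        have := norm_add_le (ι x) (ι w - ι x)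
        rwa [add_sub_cancel] at this
      have e3 : ‖ι w‖ ^ 2 ≤ 2 * ‖ι x‖ ^ 2 + 2 * s ^ 2 := by
        have : ‖ι w‖ ^ 2 ≤ (‖ι x‖ + s) ^ 2 := by gcongr
        nlinarith [sq_nonneg (‖ι x‖ - s)]
      have e4 : α * ‖ι w‖ ^ 2 ≤ |α| * (2 * ‖ι x‖ ^ 2 + 2 * s ^ 2) := by
        calc α * ‖ι w‖ ^ 2 ≤ |α| * ‖ι w‖ ^ 2 := by
              gcongr; exact le_abs_self _
          _ ≤ _ := by gcongr
      have e5 : A ≤ A / ε ^ 2 * s ^ 2 := by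
        rw [div_mul_eq_mul_div, le_div_iff₀ (by positivity)]
        gcongr
      have e6 : ‖ι v‖ * s ≤ ‖ι v‖ / ε * s ^ 2 := by
        rw [div_mul_eq_mul_div, le_div_iff₀ hε]
        have : ‖ι v‖ * s * ε ≤ ‖ι v‖ * s * s := by gcongr
        nlinarith
      have e7 : 0 ≤ r * s ^ 2 := by positivity
      have e8 : R' * s ^ 2 = A / ε ^ 2 * s ^ 2 + ‖ι v‖ / ε * s ^ 2 + 2 * |α| * s ^ 2 := by
        rw [hR']; ring
      have := le_abs_self fx
      have := neg_abs_le c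
      nlinarith
    refine le_trans (EReal.coe_le_coe_iff.2 key) ?_
    generalize f w = b at h1 ⊢
    induction b using EReal.rec with
    | bot => rw [EReal.bot_add, le_bot_iff] at h1; exact absurd h1 (EReal.coe_ne_bot _)
    | coe b => norm_cast at h1 ⊢; linarith
    | top => simp

/-- A point of the proximal set yields a regular subgradient. -/
lemma regSubgrad_of_prox (hip : ∀ a b, ip a b = inner ℝ (ι a) (ι b)) (hι : Continuous ι)
    (hinj : Function.Injective ι)
    {f : G → EReal} {γ : ℝ} (hγ : 0 < γ) {z w : G} {fw : ℝ} (hfw : f w = (fw : EReal))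
    (hw : w ∈ proxSet ip f γ z) (hbot : ∀ a, f a ≠ ⊥) :
    RegSubgrad ip f w (γ⁻¹ • (z - w)) := by
  refine ⟨⟨by rw [hfw]; exact EReal.coe_ne_top _, by rw [hfw]; exact EReal.coe_ne_bot _⟩, ?_⟩
  by_cases hnb : (𝓝[≠] w) = ⊥
  · rw [hnb]; simp
  have : (𝓝[≠] w).NeBot := ⟨hnb⟩
  have hlim : Tendsto (fun y : G => ((-(1 / (2 * γ)) * ‖ι y - ι w‖ : ℝ) : EReal)) (𝓝[≠] w)
      (𝓝 (0 : EReal)) := by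
    have : Tendsto (fun y : G => (-(1 / (2 * γ)) * ‖ι y - ι w‖ : ℝ)) (𝓝 w)
        (𝓝 (-(1 / (2 * γ)) * ‖ι w - ι w‖)) := by
      apply Continuous.tendsto
      fun_prop
    simp only [sub_self, norm_zero, mul_zero] at this
    exact (continuous_coe_real_ereal.tendsto 0).comp (this.mono_left nhdsWithin_le_nhds)
  rw [← hlim.liminf_eq]
  refine liminf_le_liminf ?_
  filter_upwards [self_mem_nhdsWithin] with y hy
  have hpos : 0 < ‖ι y - ι w‖ := by
    rw [norm_pos_iff, sub_ne_zero]
    exact fun h => hy (hinj h)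
  rw [nrm_eq hip, map_sub]
  have hp := hw y
  rw [ereal_add_le_iff hfw] at hp
  rw [hfw] at hp ⊢
  have hb := hbot y
  generalize f y = b at hp hb ⊢
  induction b using EReal.rec with
  | bot => exact absurd rfl hb
  | coe b =>
    norm_cast at hp ⊢
    rw [ip_self hip, ip_self hip] at hp
    rw [hip, map_smul, map_sub, map_sub, inner_smul_left]
    simp only [conj_trivial]
    rw [inv_mul_eq_div, le_div_iff₀ hpos]
    have e : ‖ι (y - z)‖ ^ 2 = ‖ι y - ι w‖ ^ 2 - 2 * inner ℝ (ι z - ι w) (ι y - ι w)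
        + ‖ι (w - z)‖ ^ 2 := by
      have : ι (y - z) = (ι y - ι w) - (ι z - ι w) := by rw [map_sub]; abel
      rw [this, norm_sub_sq_real, real_inner_comm, map_sub, norm_sub_rev (ι w)]
    rw [e] at hp
    field_simp at hp ⊢
    nlinarith
  | top =>
    rw [EReal.top_sub_coe, EReal.top_sub_coe, EReal.coe_mul_top_of_pos (by positivity)]
    exact le_top

set_option maxHeartbeats 1000000 in
/-- For small parameters, the proximal map is single-valued and Lipschitz near `x + γ v`. -/
lemma prox_lipschitz [ProperSpace F] (hip : ∀ a b, ip a b = inner ℝ (ι a) (ι b))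
    (hι : IsClosedEmbedding ι) {f : G → EReal} {x v : G}
    (hlsc : LowerSemicontinuous f) (hpb : ProxBounded ip f) (hv : LimSubgrad ip f x v)
    (hpr : ProxRegularAtFor ip f x v) :
    ∃ γ₀ > (0 : ℝ), ∀ γ : ℝ, 0 < γ → γ < γ₀ →
      ∃ δ > (0 : ℝ), ∃ L : ℝ, ∃ P : G → G,
        (∀ z, ‖ι (z - (x + γ • v))‖ < δ → proxSet ip f γ z = {P z}) ∧
        (∀ z z', ‖ι (z - (x + γ • v))‖ < δ → ‖ι (z' - (x + γ • v))‖ < δ →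
          ‖ι (P z - P z')‖ ≤ L * ‖ι (z - z')‖) := by
  obtain ⟨⟨hft, hfb⟩, -, ε, hε, r, hr, hreg⟩ := hpr
  obtain ⟨fx, hfx⟩ : ∃ fx : ℝ, f x = (fx : EReal) :=
    ⟨(f x).toReal, (EReal.coe_toReal hft hfb).symm⟩
  have hbot : ∀ a, f a ≠ ⊥ := proxBounded_ne_bot hpb
  have hloc : ∀ x' : G, nrm ip (x' - x) < ε →
      f x + ((ip v (x' - x) - r / 2 * ip (x' - x) (x' - x) : ℝ) : EReal) ≤ f x' := by
    refine hreg x v hv ?_ ?_ ?_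
    · rw [nrm_eq hip]; simpa using hε
    · rw [nrm_eq hip]; simpa using hε
    · rw [hfx]; norm_cast; linarith
  obtain ⟨R, hrR, hglob⟩ := global_minorant hip hpb hfx hε hr hloc
  refine ⟨1 / (R + 1), by have : 0 < R + 1 := by linarith
                          positivity, fun γ hγ hγ0 => ?_⟩
  have hR0 : 0 ≤ R := hr.trans hrR
  have hγR : γ * R < 1 := by
    rw [lt_div_iff₀ (by linarith)] at hγ0
    nlinarith
  set κ : ℝ := 1 - γ * R with hκ
  have hκ0 : 0 < κ := by linarith
  have hκr : κ ≤ 1 - γ * r := by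
    have : γ * r ≤ γ * R := by gcongr
    linarith
  set C : ℝ := 2 / κ with hC
  have hC0 : 0 < C := by positivity
  set M : ℝ := 1 + C + (1 + C) / γ + C * (γ * ‖ι v‖ + 1) / γ with hM
  have hM0 : 0 < M := by positivity
  -- expansion of squares
  have hexp : ∀ w z : G, ‖ι (w - z)‖ ^ 2 - ‖ι (x - z)‖ ^ 2 =
      ‖ι w - ι x‖ ^ 2 - 2 * inner ℝ (ι w - ι x) (ι z - ι x) := by
    intro w z
    have : ι (w - z) = (ι w - ι x) - (ι z - ι x) := by rw [map_sub]; abel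
    rw [this, norm_sub_sq_real, map_sub, norm_sub_rev (ι x)]
    ring
  -- calmness of points with value no larger than at `x`
  have hcalm : ∀ z w : G, f w + ((1 / (2 * γ) * ip (w - z) (w - z) : ℝ) : EReal) ≤
      f x + ((1 / (2 * γ) * ip (x - z) (x - z) : ℝ) : EReal) →
      ‖ι w - ι x‖ ≤ C * ‖ι (z - (x + γ • v))‖ ∧ ∃ fw : ℝ, f w = (fw : EReal) ∧
        fw ≤ fx + 1 / γ * inner ℝ (ι w - ι x) (ι z - ι x) := by
    intro z w h
    have hg := hglob w
    rw [ip_self hip, ip_self hip, hfx] at h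
    generalize f w = b at h hg ⊢
    induction b using EReal.rec with
    | bot => rw [le_bot_iff] at hg; exact absurd hg (EReal.coe_ne_bot _)
    | top =>
      rw [EReal.top_add_coe, top_le_iff] at h
      exact absurd h (by norm_cast; exact EReal.coe_ne_top _)
    | coe b =>
      norm_cast at h hg
      have he := hexp w z
      set s := ‖ι w - ι x‖ with hs
      have hs0 : 0 ≤ s := norm_nonneg _
      have h2 : b ≤ fx + 1 / γ * inner ℝ (ι w - ι x) (ι z - ι x) - 1 / (2 * γ) * s ^ 2 := by
        have : b ≤ fx - 1 / (2 * γ) * (‖ι (w - z)‖ ^ 2 - ‖ι (x - z)‖ ^ 2) := by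
          rw [mul_sub]; linarith
        rw [he] at this
        have e : 1 / (2 * γ) * (s ^ 2 - 2 * inner ℝ (ι w - ι x) (ι z - ι x)) =
          1 / (2 * γ) * s ^ 2 - 1 / γ * inner ℝ (ι w - ι x) (ι z - ι x) := by
          field_simp
        linarith
      refine ⟨?_, b, rfl, ?_⟩
      · have hD : ι z - ι x = ι (z - (x + γ • v)) + γ • ι v := by
          simp only [map_sub, map_add, map_smul]; abel
        rw [hD, inner_add_right, inner_smul_right, real_inner_comm (ι v) (ι w - ι x)] at h2
        have cs := real_inner_le_norm (ι w - ι x) (ι (z - (x + γ • v)))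
        rw [← hs] at cs
        set D := ‖ι (z - (x + γ • v))‖ with hDD
        set I := inner ℝ (ι w - ι x) (ι (z - (x + γ • v))) with hI
        set J := inner ℝ (ι v) (ι w - ι x) with hJ
        have h3 : J - R / 2 * s ^ 2 ≤ 1 / γ * (I + γ * J) - 1 / (2 * γ) * s ^ 2 := by
          linarith
        have h4 : κ * s ^ 2 ≤ 2 * (s * D) := by
          field_simp at h3
          rw [hκ]
          nlinarith
        rw [hC, div_mul_eq_mul_div, le_div_iff₀ hκ0]
        rcases hs0.eq_or_lt with h0 | h0
        · rw [← h0]; simp; rw [hDD]; exact norm_nonneg _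
        · have : s * (κ * s) ≤ s * (2 * D) := by nlinarith
          have := le_of_mul_le_mul_left this h0
          linarith
      · have : 0 ≤ 1 / (2 * γ) * s ^ 2 := by positivity
        linarith
  -- existence
  have hex : ∀ z : G, ∃ w, w ∈ proxSet ip f γ z := by
    intro z
    set φ : G → EReal := fun w => f w + ((1 / (2 * γ) * ip (w - z) (w - z) : ℝ) : EReal) with hφ
    have hφl : LowerSemicontinuous φ := by
      apply LowerSemicontinuous.add' hlsc
      · apply Continuous.lowerSemicontinuous
        apply continuous_coe_real_ereal.comp
        have : (fun w => 1 / (2 * γ) * ip (w - z) (w - z)) =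
            fun w => 1 / (2 * γ) * ‖ι w - ι z‖ ^ 2 := by
          funext w; rw [ip_self hip, map_sub]
        rw [this]
        have := hι.continuous
        fun_prop
      · intro w
        exact EReal.continuousAt_add (Or.inr (EReal.coe_ne_bot _)) (Or.inr (EReal.coe_ne_top _))
    set K : Set G := ι ⁻¹' (Metric.closedBall (ι x) (C * ‖ι (z - (x + γ • v))‖)) with hK
    have hKc : IsCompact K := hι.isCompact_preimage (isCompact_closedBall _ _)
    have hKn : x ∈ K := by
      rw [hK, Set.mem_preimage]
      exact Metric.mem_closedBall_self (by positivity)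
    obtain ⟨w, hwK, hw⟩ := LowerSemicontinuousOn.exists_isMinOn ⟨x, hKn⟩ hKc
      (hφl.lowerSemicontinuousOn K)
    refine ⟨w, fun w' => ?_⟩
    by_cases hw' : φ w' ≤ φ x
    · apply hw
      rw [hK, Set.mem_preimage, Metric.mem_closedBall, dist_eq_norm]
      exact (hcalm z w' hw').1
    · exact (hw hKn).trans (not_le.1 hw').le
  set δ : ℝ := min 1 (ε / M) with hδ
  have hδ0 : 0 < δ := by positivity
  have hnear : ∀ z w : G, ‖ι (z - (x + γ • v))‖ < δ → w ∈ proxSet ip f γ z →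
      (∃ fw : ℝ, f w = (fw : EReal)) ∧ nrm ip (w - x) < ε ∧
      ∀ x' : G, nrm ip (x' - x) < ε → f w + ((ip (γ⁻¹ • (z - w)) (x' - w) -
        r / 2 * ip (x' - w) (x' - w) : ℝ) : EReal) ≤ f x' := by
    intro z w hz hw
    obtain ⟨hc, fw, hfw, hle⟩ := hcalm z w (hw x)
    set D := ‖ι (z - (x + γ • v))‖ with hDD
    have hD0 : 0 ≤ D := norm_nonneg _
    have hD1 : D ≤ 1 := hz.le.trans (min_le_left _ _)
    have hDM : M * D < ε := by
      have : D < ε / M := lt_of_lt_of_le hz (min_le_right _ _)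
      rw [lt_div_iff₀ hM0] at this
      linarith
    have hγi : 0 < γ⁻¹ := by positivity
    have p1 : 0 ≤ C * D := by positivity
    have p2 : 0 ≤ (1 + C) / γ * D := by positivity
    have p3 : 0 ≤ C * (γ * ‖ι v‖ + 1) / γ * D := by positivity
    have hMD : M * D = D + C * D + (1 + C) / γ * D + C * (γ * ‖ι v‖ + 1) / γ * D := by
      rw [hM]; ring
    have n1 : nrm ip (w - x) < ε := by
      rw [nrm_eq hip, map_sub]; linarith
    refine ⟨⟨fw, hfw⟩, n1, ?_⟩
    have hsub : LimSubgrad ip f w (γ⁻¹ • (z - w)) :=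
      ⟨fun _ => w, fun _ => γ⁻¹ • (z - w),
        fun _ => regSubgrad_of_prox hip hι.continuous hι.injective hγ hfw hw hbot,
        tendsto_const_nhds, tendsto_const_nhds, tendsto_const_nhds⟩
    refine hreg w _ hsub n1 ?_ ?_
    · rw [nrm_eq hip]
      have : ι (γ⁻¹ • (z - w) - v) = γ⁻¹ • (ι (z - (x + γ • v)) - (ι w - ι x)) := by
        simp only [map_sub, map_add, map_smul, smul_sub, smul_add, smul_smul,
          inv_mul_cancel₀ hγ.ne', one_smul]
        abel
      rw [this, norm_smul, Real.norm_of_nonneg hγi.le]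
      have t : ‖ι (z - (x + γ • v)) - (ι w - ι x)‖ ≤ D + C * D :=
        (norm_sub_le _ _).trans (by linarith)
      have : γ⁻¹ * ‖ι (z - (x + γ • v)) - (ι w - ι x)‖ ≤ γ⁻¹ * (D + C * D) := by gcongr
      have e : γ⁻¹ * (D + C * D) = (1 + C) / γ * D := by field_simp
      linarith
    · rw [hfw, hfx]
      norm_cast
      have hzx : ‖ι z - ι x‖ ≤ γ * ‖ι v‖ + 1 := by
        have hD : ι z - ι x = ι (z - (x + γ • v)) + γ • ι v := by
          simp only [map_sub, map_add, map_smul]; abel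
        rw [hD]
        refine (norm_add_le _ _).trans ?_
        rw [norm_smul, Real.norm_of_nonneg hγ.le]
        linarith
      have i1 : inner ℝ (ι w - ι x) (ι z - ι x) ≤ (C * D) * (γ * ‖ι v‖ + 1) :=
        (real_inner_le_norm _ _).trans (by gcongr)
      have : 1 / γ * inner ℝ (ι w - ι x) (ι z - ι x) ≤ 1 / γ * ((C * D) * (γ * ‖ι v‖ + 1)) := by
        gcongr
      have e : 1 / γ * ((C * D) * (γ * ‖ι v‖ + 1)) = C * (γ * ‖ι v‖ + 1) / γ * D := by
        field_simp
      linarith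
  have hlip : ∀ z z' w w' : G, ‖ι (z - (x + γ • v))‖ < δ → ‖ι (z' - (x + γ • v))‖ < δ →
      w ∈ proxSet ip f γ z → w' ∈ proxSet ip f γ z' →
      ‖ι (w - w')‖ ≤ κ⁻¹ * ‖ι (z - z')‖ := by
    intro z z' w w' hz hz' hw hw'
    obtain ⟨⟨fw, hfw⟩, n1, h1⟩ := hnear z w hz hw
    obtain ⟨⟨fw', hfw'⟩, n1', h1'⟩ := hnear z' w' hz' hw'
    have a := h1 w' n1'
    have b := h1' w n1
    rw [hfw, hfw', ip_self hip, hip] at a b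
    norm_cast at a b
    have e1 : ‖ι (w' - w)‖ = ‖ι (w - w')‖ := by rw [map_sub, map_sub, norm_sub_rev]
    have e2 : inner ℝ (ι (γ⁻¹ • (z - w))) (ι (w' - w)) =
        - (γ⁻¹ * (inner ℝ (ι z) (ι (w - w')) - inner ℝ (ι w) (ι (w - w')))) := by
      rw [← neg_sub w w', map_neg, inner_neg_right, map_smul, inner_smul_left, map_sub,
        inner_sub_left]
      simp
    have e3 : inner ℝ (ι (γ⁻¹ • (z' - w'))) (ι (w - w')) =
        (γ⁻¹ * (inner ℝ (ι z') (ι (w - w')) - inner ℝ (ι w') (ι (w - w')))) := by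
      rw [map_smul, inner_smul_left, map_sub, inner_sub_left]
      simp
    rw [e1, e2] at a
    rw [e3] at b
    have e4 : inner ℝ (ι w) (ι (w - w')) - inner ℝ (ι w') (ι (w - w')) = ‖ι (w - w')‖ ^ 2 := by
      rw [← inner_sub_left, ← map_sub, real_inner_self_eq_norm_sq]
    have e5 : inner ℝ (ι z) (ι (w - w')) - inner ℝ (ι z') (ι (w - w')) ≤
        ‖ι (z - z')‖ * ‖ι (w - w')‖ := by
      rw [← inner_sub_left, ← map_sub]
      exact real_inner_le_norm _ _
    set s := ‖ι (w - w')‖ with hs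
    have hs0 : 0 ≤ s := norm_nonneg _
    have q : s ^ 2 - γ * r * s ^ 2 ≤ ‖ι (z - z')‖ * s := by
      have q1 : -(r * s ^ 2) ≤ γ⁻¹ * (inner ℝ (ι z) (ι (w - w')) - inner ℝ (ι z') (ι (w - w')) -
        (inner ℝ (ι w) (ι (w - w')) - inner ℝ (ι w') (ι (w - w')))) := by
        linarith
      rw [e4, inv_mul_eq_div, le_div_iff₀ hγ] at q1
      linarith
    have q2 : κ * s ^ 2 ≤ ‖ι (z - z')‖ * s := by
      have : κ * s ^ 2 ≤ (1 - γ * r) * s ^ 2 := by gcongr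
      linarith
    rw [inv_mul_eq_div, le_div_iff₀ hκ0]
    rcases hs0.eq_or_lt with h0 | h0
    · rw [← h0]; simp
    · have : s * (κ * s) ≤ s * ‖ι (z - z')‖ := by linarith
      have := le_of_mul_le_mul_left this h0
      linarith
  choose P hP using hex
  refine ⟨δ, hδ0, κ⁻¹, P, fun z hz => ?_, fun z z' hz hz' => hlip z z' _ _ hz hz' (hP z) (hP z')⟩
  apply Set.eq_singleton_iff_unique_mem.2 ⟨hP z, fun w hw => ?_⟩
  have := hlip z z w (P z) hz hz hw (hP z)
  rw [sub_self, map_zero, norm_zero, mul_zero] at this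
  have := norm_le_zero_iff.1 this
  rw [map_sub, sub_eq_zero] at this
  exact hι.injective this

end GenericProx



section SpectralProx

variable {n : ℕ}

/-- The embedding of `Sⁿ` into a Euclidean space of entries. -/
def entryMap (n : ℕ) : Sym n →ₗ[ℝ] EuclideanSpace ℝ (Fin n × Fin n) where
  toFun A := WithLp.toLp 2 (fun p => A.val p.1 p.2)
  map_add' A B := by ext p; simp
  map_smul' c A := by ext p; simp

lemma entryMap_apply (A : Sym n) (p : Fin n × Fin n) : entryMap n A p = A.val p.1 p.2 := rfl

lemma entryMap_injective : Function.Injective (entryMap n) := by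
  intro A B h
  apply Subtype.ext
  ext i j
  rw [← entryMap_apply A (i, j), h, entryMap_apply]

lemma entryMap_closedEmbedding : IsClosedEmbedding (entryMap n) := by
  have : FiniteDimensional ℝ (Sym n) := inferInstance
  exact LinearMap.isClosedEmbedding_of_injective (LinearMap.ker_eq_bot.2 entryMap_injective)

lemma ipM_eq (A B : Sym n) : ipM A B = inner ℝ (entryMap n A) (entryMap n B) := by
  have hB : (B.val)ᵀ = B.val := B.property
  simp only [ipM, Matrix.trace, Matrix.diag, Matrix.mul_apply, PiLp.inner_apply, entryMap_apply,
    Fintype.sum_prod_type]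
  refine Finset.sum_congr rfl fun i _ => Finset.sum_congr rfl fun j _ => ?_
  have : B.val j i = B.val i j := by
    conv_lhs => rw [← hB]
    rfl
  rw [this]
  simp [mul_comm]

/-- Conjugation by a matrix. -/
def conjS (Q : Matrix (Fin n) (Fin n) ℝ) (A : Sym n) : Sym n :=
  ⟨Q * A.val * Qᵀ, by
    have hA : (A.val)ᵀ = A.val := A.property
    change (Q * A.val * Qᵀ)ᵀ = _
    rw [Matrix.transpose_mul, Matrix.transpose_mul, Matrix.transpose_transpose, hA,
      Matrix.mul_assoc]⟩

lemma conjS_val (Q : Matrix (Fin n) (Fin n) ℝ) (A : Sym n) :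
    (conjS Q A).val = Q * A.val * Qᵀ := rfl

lemma diagSym_val (u : Fin n → ℝ) : (diagSym u).val = Matrix.diagonal u := rfl

lemma orth_comm {Q : Matrix (Fin n) (Fin n) ℝ} (hQ : Q * Qᵀ = 1) : Qᵀ * Q = 1 :=
  mul_eq_one_comm.1 hQ

lemma orth_mul {Q R : Matrix (Fin n) (Fin n) ℝ} (hQ : Q * Qᵀ = 1) (hR : R * Rᵀ = 1) :
    (Q * R) * (Q * R)ᵀ = 1 := by
  rw [Matrix.transpose_mul, ← Matrix.mul_assoc, Matrix.mul_assoc Q, hR, Matrix.mul_one, hQ]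

lemma orth_transpose {Q : Matrix (Fin n) (Fin n) ℝ} (hQ : Q * Qᵀ = 1) : Qᵀ * Qᵀᵀ = 1 := by
  rw [Matrix.transpose_transpose]; exact orth_comm hQ

lemma conjS_conjS (Q R : Matrix (Fin n) (Fin n) ℝ) (A : Sym n) :
    conjS Q (conjS R A) = conjS (Q * R) A := by
  apply Subtype.ext
  simp only [conjS_val, Matrix.transpose_mul, Matrix.mul_assoc]

lemma conjS_one (A : Sym n) : conjS 1 A = A := by
  apply Subtype.ext
  simp [conjS_val]

lemma conjS_sub (Q : Matrix (Fin n) (Fin n) ℝ) (A B : Sym n) :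
    conjS Q (A - B) = conjS Q A - conjS Q B := by
  apply Subtype.ext
  simp [conjS_val, Matrix.mul_sub, Matrix.sub_mul]

lemma conjS_transpose_conjS {Q : Matrix (Fin n) (Fin n) ℝ} (hQ : Q * Qᵀ = 1) (A : Sym n) :
    conjS Q (conjS Qᵀ A) = A := by
  rw [conjS_conjS, hQ, conjS_one]

lemma conjS_conjS_transpose {Q : Matrix (Fin n) (Fin n) ℝ} (hQ : Q * Qᵀ = 1) (A : Sym n) :
    conjS Qᵀ (conjS Q A) = A := by
  rw [conjS_conjS, orth_comm hQ, conjS_one]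

lemma ipM_conjS {Q : Matrix (Fin n) (Fin n) ℝ} (hQ : Q * Qᵀ = 1) (A B : Sym n) :
    ipM (conjS Q A) (conjS Q B) = ipM A B := by
  simp only [ipM, conjS_val]
  have : Q * A.val * Qᵀ * (Q * B.val * Qᵀ) = Q * (A.val * B.val * Qᵀ) := by
    calc _ = Q * A.val * (Qᵀ * Q) * B.val * Qᵀ := by simp only [Matrix.mul_assoc]
      _ = _ := by rw [orth_comm hQ]; simp only [Matrix.mul_assoc, Matrix.one_mul]
  rw [this, Matrix.trace_mul_comm, Matrix.mul_assoc, orth_comm hQ, Matrix.mul_one]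

lemma isHermitian_sym (A : Sym n) : A.val.IsHermitian := by
  have hA : (A.val)ᵀ = A.val := A.property
  rw [Matrix.IsHermitian, Matrix.conjTranspose_eq_transpose_of_trivial, hA]

lemma eigval_conjS {Q : Matrix (Fin n) (Fin n) ℝ} (hQ : Q * Qᵀ = 1) (A : Sym n) :
    eigval (conjS Q A).val = eigval A.val := by
  have h : (isHermitian_sym (conjS Q A)).eigenvalues = (isHermitian_sym A).eigenvalues := by
    rw [Matrix.IsHermitian.eigenvalues_eq_eigenvalues_iff, conjS_val, Matrix.charpoly_mul_comm,
      ← Matrix.mul_assoc, orth_comm hQ, Matrix.one_mul]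
  unfold eigval
  rw [dif_pos (isHermitian_sym (conjS Q A)), dif_pos (isHermitian_sym A), h]

lemma exists_perm_of_map_eq {u w : Fin n → ℝ}
    (h : Multiset.map u Finset.univ.val = Multiset.map w Finset.univ.val) :
    ∃ σ : Equiv.Perm (Fin n), ∀ i, u (σ i) = w i := by
  classical
  have hc : ∀ a, Fintype.card {i // w i = a} = Fintype.card {i // u i = a} := by
    intro a
    have := congrArg (Multiset.count a) h
    rw [Multiset.count_map, Multiset.count_map] at this
    rw [Fintype.card_subtype, Fintype.card_subtype]
    simp only [eq_comm (a := a)] at this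
    exact this.symm
  refine ⟨Equiv.ofFiberEquiv (fun a => Fintype.equivOfCardEq (hc a)), fun i => ?_⟩
  exact Equiv.ofFiberEquiv_map _ i

lemma specFn_diag {θ : (Fin n → ℝ) → EReal} (hsym : SymmetricFn θ) (u : Fin n → ℝ) :
    specFn θ (diagSym u) = θ u := by
  have hH := isHermitian_sym (diagSym u)
  have h := hH.roots_charpoly_eq_eigenvalues
  have h2 : (diagSym u).val.charpoly.roots = Multiset.map u Finset.univ.val := by
    have : (diagSym u).val.charpoly = (Matrix.diagonal u).charpoly := rfl
    rw [this, Matrix.charpoly_diagonal, Polynomial.roots_prod]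
    · simp
    · simp [Finset.prod_ne_zero_iff, Polynomial.X_sub_C_ne_zero]
  rw [h2] at h
  obtain ⟨σ, hσ⟩ := exists_perm_of_map_eq h
  have he : hH.eigenvalues = fun i => u (σ i) := by
    funext i
    rw [hσ i]; rfl
  unfold specFn eigval
  rw [dif_pos hH]
  refine (hsym hH.eigenvalues _).trans ?_
  rw [he]
  exact hsym u σ

lemma specFn_conj {θ : (Fin n → ℝ) → EReal} {Q : Matrix (Fin n) (Fin n) ℝ}
    (hQ : Q * Qᵀ = 1) (A : Sym n) : specFn θ (conjS Q A) = specFn θ A := by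
  unfold specFn
  rw [eigval_conjS hQ]

lemma ipM_diag (u w : Fin n → ℝ) : ipM (diagSym u) (diagSym w) = ipV u w := by
  simp [ipM, diagSym_val, ipV]

lemma diagSym_sub (u w : Fin n → ℝ) : diagSym u - diagSym w = diagSym (u - w) := by
  apply Subtype.ext
  simp [diagSym_val]

lemma diagSym_injective : Function.Injective (diagSym (n := n)) := by
  intro u w h
  have := congrArg Subtype.val h
  exact Matrix.diagonal_injective this

lemma conj_mem_prox {θ : (Fin n → ℝ) → EReal} {γ : ℝ} {Q : Matrix (Fin n) (Fin n) ℝ}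
    (hQ : Q * Qᵀ = 1) {A W : Sym n} (hW : W ∈ proxSet ipM (specFn θ) γ A) :
    conjS Q W ∈ proxSet ipM (specFn θ) γ (conjS Q A) := by
  intro W'
  have := hW (conjS Qᵀ W')
  rw [specFn_conj (orth_transpose hQ)] at this
  rw [specFn_conj hQ, ← conjS_sub, ipM_conjS hQ]
  refine this.trans_eq ?_
  congr 3
  rw [← ipM_conjS hQ, conjS_sub, conjS_transpose_conjS hQ]

/-- The link between the proximal maps of `g` and `θ`. -/
lemma prox_link {θ : (Fin n → ℝ) → EReal} (hsym : SymmetricFn θ) {γ : ℝ}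
    {Q : Matrix (Fin n) (Fin n) ℝ} (hQ : Q * Qᵀ = 1) (u : Fin n → ℝ) {W : Sym n}
    (hW : proxSet ipM (specFn θ) γ (conjS Q (diagSym u)) = {W}) :
    ∃ w : Fin n → ℝ, W = conjS Q (diagSym w) ∧ proxSet ipV θ γ u = {w} := by
  classical
  have hWm : W ∈ proxSet ipM (specFn θ) γ (conjS Q (diagSym u)) := by rw [hW]; rfl
  -- W' diagonal
  have hval : ∀ w : Fin n → ℝ,
      specFn θ (conjS Q (diagSym w)) + ((1 / (2 * γ) * ipM (conjS Q (diagSym w) -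
        conjS Q (diagSym u)) (conjS Q (diagSym w) - conjS Q (diagSym u)) : ℝ) : EReal) =
      θ w + ((1 / (2 * γ) * ipV (w - u) (w - u) : ℝ) : EReal) := by
    intro w
    rw [specFn_conj hQ, specFn_diag hsym, ← conjS_sub, ipM_conjS hQ, diagSym_sub, ipM_diag]
  have hdiag : ∀ i j, i ≠ j → (conjS Qᵀ W).val i j = 0 := by
    intro i j hij
    set s : Fin n → ℝ := fun k => if k = i then -1 else 1 with hs
    have hss : ∀ k, s k * s k = 1 := by intro k; simp only [hs]; split_ifs <;> norm_num
    have hS : Matrix.diagonal s * (Matrix.diagonal s)ᵀ = 1 := by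
      rw [Matrix.diagonal_transpose, Matrix.diagonal_mul_diagonal]
      simp only [hss]
      exact Matrix.diagonal_one
    have h1 : conjS (Q * Matrix.diagonal s * Qᵀ) W ∈
        proxSet ipM (specFn θ) γ (conjS (Q * Matrix.diagonal s * Qᵀ) (conjS Q (diagSym u))) :=
      conj_mem_prox (orth_mul (orth_mul hQ hS) (orth_transpose hQ)) hWm
    have h2 : conjS (Q * Matrix.diagonal s * Qᵀ) (conjS Q (diagSym u)) = conjS Q (diagSym u) := by
      rw [← conjS_conjS, conjS_conjS_transpose hQ, ← conjS_conjS]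
      congr 1
      apply Subtype.ext
      rw [conjS_val, diagSym_val, Matrix.diagonal_transpose, Matrix.diagonal_mul_diagonal,
        Matrix.diagonal_mul_diagonal]
      congr 1
      funext k
      have := hss k
      linear_combination u k * this
    rw [h2, hW] at h1
    have h3 : conjS (Q * Matrix.diagonal s * Qᵀ) W = W := h1
    have h4 : conjS (Matrix.diagonal s) (conjS Qᵀ W) = conjS Qᵀ W := by
      conv_rhs => rw [← h3]
      rw [conjS_conjS, conjS_conjS, ← Matrix.mul_assoc, ← Matrix.mul_assoc, orth_comm hQ,
        Matrix.one_mul]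
    have h5 := congrFun (congrFun (congrArg Subtype.val h4) i) j
    rw [conjS_val, Matrix.diagonal_transpose, Matrix.mul_diagonal, Matrix.diagonal_mul] at h5
    simp only [hs, if_true, if_neg hij.symm] at h5
    linarith
  set w : Fin n → ℝ := fun i => (conjS Qᵀ W).val i i with hw
  have hWw : W = conjS Q (diagSym w) := by
    rw [← conjS_transpose_conjS hQ W]
    congr 1
    apply Subtype.ext
    ext i j
    rw [diagSym_val]
    by_cases hij : i = j
    · subst hij; simp [hw]
    · rw [hdiag i j hij, Matrix.diagonal_apply_ne _ hij]
  refine ⟨w, hWw, ?_⟩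
  rw [hWw] at hWm
  refine Set.eq_singleton_iff_unique_mem.2 ⟨?_, fun w' hw' => ?_⟩
  · intro w'
    have := hWm (conjS Q (diagSym w'))
    rwa [hval, hval] at this
  · have : conjS Q (diagSym w') ∈ proxSet ipM (specFn θ) γ (conjS Q (diagSym u)) := by
      intro A
      have h1 := hw' w
      rw [← hval, ← hval] at h1
      exact h1.trans (hWm A)
    rw [hW] at this
    have h2 : conjS Q (diagSym w') = conjS Q (diagSym w) := by rw [← hWw]; exact this
    have h3 := congrArg (conjS Qᵀ) h2
    rw [conjS_conjS_transpose hQ, conjS_conjS_transpose hQ] at h3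
    exact diagSym_injective h3

/-- Entrywise one-sided derivative at `0` of a matrix curve. -/
def MD (M : ℝ → Matrix (Fin n) (Fin n) ℝ) (M' : Matrix (Fin n) (Fin n) ℝ) : Prop :=
  ∀ i j, HasDerivWithinAt (fun t => M t i j) (M' i j) (Set.Ioi 0) 0

lemma MD.const (M : Matrix (Fin n) (Fin n) ℝ) : MD (fun _ => M) 0 := fun i j => by
  simpa using hasDerivWithinAt_const (0 : ℝ) (Set.Ioi 0) (M i j)

lemma MD.transpose {M : ℝ → Matrix (Fin n) (Fin n) ℝ} {M' : Matrix (Fin n) (Fin n) ℝ}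
    (h : MD M M') : MD (fun t => (M t)ᵀ) M'ᵀ := fun i j => h j i

lemma MD.mul {M N : ℝ → Matrix (Fin n) (Fin n) ℝ} {M' N' : Matrix (Fin n) (Fin n) ℝ}
    (hM : MD M M') (hN : MD N N') : MD (fun t => M t * N t) (M' * N 0 + M 0 * N') := by
  intro i j
  have : HasDerivWithinAt (fun t => ∑ k, M t i k * N t k j)
      (∑ k, (M' i k * N 0 k j + M 0 i k * N' k j)) (Set.Ioi 0) 0 :=
    HasDerivWithinAt.fun_sum fun k _ => (hM i k).mul (hN k j)
  simpa only [Matrix.mul_apply, Matrix.add_apply, Finset.sum_add_distrib] using this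

lemma MD.congr_deriv {M : ℝ → Matrix (Fin n) (Fin n) ℝ} {M' N' : Matrix (Fin n) (Fin n) ℝ}
    (hM : MD M M') (h : M' = N') : MD M N' := h ▸ hM

lemma MD.diagonal {p : ℝ → Fin n → ℝ} {p' : Fin n → ℝ}
    (h : ∀ i, HasDerivWithinAt (fun t => p t i) (p' i) (Set.Ioi 0) 0) :
    MD (fun t => Matrix.diagonal (p t)) (Matrix.diagonal p') := by
  intro i j
  by_cases hij : i = j
  · subst hij; simpa using h i
  · simp only [Matrix.diagonal_apply_ne _ hij]
    exact hasDerivWithinAt_const _ _ _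

/-- Slopes converge. -/
lemma MD.tendsto {M : ℝ → Matrix (Fin n) (Fin n) ℝ} {M' : Matrix (Fin n) (Fin n) ℝ}
    (h : MD M M') : Tendsto (fun t : ℝ => t⁻¹ • (M t - M 0)) (𝓝[>] 0) (𝓝 M') := by
  apply tendsto_pi_nhds.2
  intro i
  apply tendsto_pi_nhds.2
  intro j
  have := (hasDerivWithinAt_iff_tendsto_slope' (by simp)).1 (h i j)
  refine this.congr fun t => ?_
  simp [slope_def_field, div_eq_inv_mul]

/-- A curve of orthogonal matrices with prescribed skew derivative. -/
lemma exists_orth_curve (K : Matrix (Fin n) (Fin n) ℝ) (hK : Kᵀ = -K) :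
    ∃ V : ℝ → Matrix (Fin n) (Fin n) ℝ, (∀ t, V t * (V t)ᵀ = 1) ∧ V 0 = 1 ∧ MD V K := by
  refine ⟨fun t => NormedSpace.exp (t • K), fun t => ?_, by simp, ?_⟩
  · rw [← Matrix.exp_transpose, Matrix.transpose_smul, hK, smul_neg, Matrix.exp_neg]
    exact Matrix.mul_nonsing_inv _ ((Matrix.isUnit_iff_isUnit_det _).1 (Matrix.isUnit_exp _))
  · intro i j
    let _ : NormedRing (Matrix (Fin n) (Fin n) ℝ) := Matrix.linftyOpNormedRing
    let _ : NormedAlgebra ℝ (Matrix (Fin n) (Fin n) ℝ) := Matrix.linftyOpNormedAlgebra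
    have h := hasDerivAt_exp_smul_const (𝕂 := ℝ) K (0 : ℝ)
    have h2 := (Matrix.entryLinearMap ℝ ℝ i j).toContinuousLinearMap.hasFDerivAt.comp_hasDerivAt
      (0 : ℝ) h
    simp at h2
    exact h2.hasDerivWithinAt

end SpectralProx



section FinalProx

variable {n : ℕ}

/-- Block-diagonalisation: a symmetric matrix respecting the level sets of `z` is diagonalised by
an orthogonal matrix respecting the level sets of `z`. -/
lemma exists_block_diag (z : Fin n → ℝ) (B : Matrix (Fin n) (Fin n) ℝ) (hB : Bᵀ = B)
    (hBz : ∀ i j, z i ≠ z j → B i j = 0) :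
    ∃ (Q : Matrix (Fin n) (Fin n) ℝ) (d : Fin n → ℝ), Q * Qᵀ = 1 ∧
      (∀ i j, z i ≠ z j → Q i j = 0) ∧ B = Q * Matrix.diagonal d * Qᵀ := by
  classical
  have hH : ∀ v : ℝ, (B.submatrix (fun i : {i // z i = v} => i.1)
      (fun i : {i // z i = v} => i.1)).IsHermitian := by
    intro v
    apply Matrix.IsHermitian.submatrix
    rw [Matrix.IsHermitian, Matrix.conjTranspose_eq_transpose_of_trivial, hB]
  set E : ∀ v : ℝ, Matrix {i // z i = v} {i // z i = v} ℝ :=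
    fun v => ((hH v).eigenvectorUnitary : Matrix {i // z i = v} {i // z i = v} ℝ) with hE
  have hEo : ∀ v, (E v)ᵀ * E v = 1 := by
    intro v
    have := Unitary.coe_star_mul_self (hH v).eigenvectorUnitary
    rwa [Matrix.star_eq_conjTranspose, Matrix.conjTranspose_eq_transpose_of_trivial] at this
  have hEd : ∀ v, B.submatrix (fun i : {i // z i = v} => i.1) (fun i : {i // z i = v} => i.1) * E v
      = E v * Matrix.diagonal (hH v).eigenvalues := by
    intro v
    have h := (hH v).spectral_theorem
    rw [Unitary.conjStarAlgAut_apply] at h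
    conv_lhs => rw [h]
    rw [Matrix.mul_assoc, Unitary.coe_star_mul_self, Matrix.mul_one]
    rfl
  set Q : Matrix (Fin n) (Fin n) ℝ :=
    Matrix.of fun i j => if h : z i = z j then E (z j) ⟨i, h⟩ ⟨j, rfl⟩ else 0 with hQ
  set d : Fin n → ℝ := fun j => (hH (z j)).eigenvalues ⟨j, rfl⟩ with hd
  have hQv : ∀ v i j (hi : z i = v) (hj : z j = v), Q i j = E v ⟨i, hi⟩ ⟨j, hj⟩ := by
    intro v i j hi hj
    subst hj
    simp [hQ, hi]
  have hQ0 : ∀ i j, z i ≠ z j → Q i j = 0 := by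
    intro i j hij
    simp [hQ, hij]
  have hdv : ∀ v j (hj : z j = v), d j = (hH v).eigenvalues ⟨j, hj⟩ := by
    intro v j hj
    subst hj
    rfl
  have hsum : ∀ (v : ℝ) (g : Fin n → ℝ), (∀ i, z i ≠ v → g i = 0) →
      ∑ i, g i = ∑ i : {i // z i = v}, g i.1 := by
    intro v g hg
    rw [← Finset.sum_subtype (Finset.univ.filter (fun i => z i = v)) (by simp) g]
    symm
    apply Finset.sum_subset (Finset.filter_subset _ _)
    intro i _ hi
    exact hg i (by simpa using hi)
  have hQo : Qᵀ * Q = 1 := by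
    ext j k
    rw [Matrix.mul_apply]
    simp only [Matrix.transpose_apply]
    by_cases hjk : z j = z k
    · rw [hsum (z k) _ (fun i hi => by rw [hQ0 i k hi, mul_zero])]
      have h1 := congrFun (congrFun (hEo (z k)) ⟨j, hjk⟩) ⟨k, rfl⟩
      rw [Matrix.mul_apply] at h1
      simp only [Matrix.transpose_apply] at h1
      have : ∀ i : {i // z i = z k}, Q i.1 j * Q i.1 k = E (z k) i ⟨j, hjk⟩ * E (z k) i ⟨k, rfl⟩ := by
        intro i
        rw [hQv (z k) i.1 j i.2 hjk, hQv (z k) i.1 k i.2 rfl]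
      rw [Finset.sum_congr rfl (fun i _ => this i), h1, Matrix.one_apply, Matrix.one_apply]
      simp
    · rw [Matrix.one_apply_ne (fun h => hjk (by rw [h]))]
      apply Finset.sum_eq_zero
      intro i _
      by_cases hi : z i = z j
      · rw [hQ0 i k (by rw [hi]; exact hjk), mul_zero]
      · rw [hQ0 i j hi, zero_mul]
  have hBQ : B * Q = Q * Matrix.diagonal d := by
    ext i j
    rw [Matrix.mul_apply, Matrix.mul_diagonal]
    by_cases hij : z i = z j
    · rw [hsum (z j) _ (fun k hk => by rw [hQ0 k j hk, mul_zero])]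
      have h1 := congrFun (congrFun (hEd (z j)) ⟨i, hij⟩) ⟨j, rfl⟩
      rw [Matrix.mul_apply, Matrix.mul_diagonal] at h1
      simp only [Matrix.submatrix_apply] at h1
      rw [hQv (z j) i j hij rfl, hdv (z j) j rfl, ← h1]
      refine Finset.sum_congr rfl fun k _ => ?_
      rw [hQv (z j) k.1 j k.2 rfl]
    · rw [hQ0 i j hij, zero_mul]
      apply Finset.sum_eq_zero
      intro k _
      by_cases hk : z k = z j
      · rw [hBz i k (by rw [hk]; exact hij), zero_mul]
      · rw [hQ0 k j hk, mul_zero]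
  have hQo' : Q * Qᵀ = 1 := mul_eq_one_comm.1 hQo
  refine ⟨Q, d, hQo', hQ0, ?_⟩
  rw [← hBQ, Matrix.mul_assoc, hQo', Matrix.mul_one]

/-- First-order decomposition of a perturbation of a diagonal matrix. -/
lemma exists_first_order (z : Fin n → ℝ) (H : Matrix (Fin n) (Fin n) ℝ) (hH : Hᵀ = H) :
    ∃ (K Q : Matrix (Fin n) (Fin n) ℝ) (d : Fin n → ℝ), Kᵀ = -K ∧ Q * Qᵀ = 1 ∧
      Q * Matrix.diagonal z * Qᵀ = Matrix.diagonal z ∧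
      K * Matrix.diagonal z - Matrix.diagonal z * K + Q * Matrix.diagonal d * Qᵀ = H := by
  classical
  have hs : ∀ i j, H j i = H i j := fun i j => congrFun (congrFun hH i) j
  obtain ⟨Q, d, hQ, hQ0, hB⟩ := exists_block_diag z
    (Matrix.of fun i j => if z i = z j then H i j else 0)
    (by ext i j; simp [hs, eq_comm]) (by intro i j h; simp [h])
  refine ⟨Matrix.of fun i j => if z i = z j then 0 else H i j / (z j - z i), Q, d, ?_, hQ, ?_, ?_⟩
  · ext i j
    simp only [Matrix.transpose_apply, Matrix.of_apply, Matrix.neg_apply, hs i j,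
      eq_comm (a := z j)]
    split_ifs with h
    · simp
    · rw [← neg_sub (z j) (z i), div_neg]
  · have : Q * Matrix.diagonal z = Matrix.diagonal z * Q := by
      ext i j
      rw [Matrix.mul_diagonal, Matrix.diagonal_mul]
      by_cases h : z i = z j
      · rw [h, mul_comm]
      · rw [hQ0 i j h]; simp
    rw [this, Matrix.mul_assoc, hQ, Matrix.mul_one]
  · rw [← hB]
    ext i j
    rw [Matrix.add_apply, Matrix.sub_apply, Matrix.mul_diagonal, Matrix.diagonal_mul]
    simp only [Matrix.of_apply]
    split_ifs with h
    · simp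
    · have : z j - z i ≠ 0 := sub_ne_zero.2 (fun h' => h h'.symm)
      field_simp
      ring

lemma exists_sym_limit {f : ℝ → Sym n} {M : Matrix (Fin n) (Fin n) ℝ} {l : Filter ℝ} [l.NeBot]
    (h : Tendsto (fun t => (f t).val) l (𝓝 M)) : ∃ L : Sym n, L.val = M ∧ Tendsto f l (𝓝 L) := by
  have h2 : Tendsto (fun t => ((f t).val)ᵀ) l (𝓝 Mᵀ) :=
    ((continuous_id.matrix_transpose).tendsto M).comp h
  have h3 : Tendsto (fun t => (f t).val) l (𝓝 Mᵀ) :=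
    h2.congr fun t => (f t).property
  have h4 : Mᵀ = M := tendsto_nhds_unique h3 h
  exact ⟨⟨M, h4⟩, rfl, tendsto_subtype_rng.2 h⟩

lemma continuous_conj_diag (U : Matrix (Fin n) (Fin n) ℝ) :
    Continuous (fun u : Fin n → ℝ => conjS U (diagSym u)) := by
  apply Continuous.subtype_mk
  exact (continuous_const.matrix_mul (continuous_id.matrix_diagonal)).matrix_mul continuous_const

/-- Diagonal of the conjugated matrix. -/
def dg (U : Matrix (Fin n) (Fin n) ℝ) (A : Sym n) : Fin n → ℝ := fun i => (conjS Uᵀ A).val i i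

lemma continuous_dg (U : Matrix (Fin n) (Fin n) ℝ) : Continuous (dg U) := by
  apply continuous_pi
  intro i
  have : Continuous fun A : Sym n => Uᵀ * A.val * Uᵀᵀ :=
    (continuous_const.matrix_mul continuous_subtype_val).matrix_mul continuous_const
  exact this.matrix_elem i i

lemma dg_smul_sub (U : Matrix (Fin n) (Fin n) ℝ) (t : ℝ) (A B : Sym n) :
    dg U (t • (A - B)) = t • (dg U A - dg U B) := by
  funext i
  simp [dg, conjS_val, Matrix.mul_sub, Matrix.sub_mul]

lemma dg_conj_diag {U : Matrix (Fin n) (Fin n) ℝ} (hU : U * Uᵀ = 1) (w : Fin n → ℝ) :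
    dg U (conjS U (diagSym w)) = w := by
  funext i
  simp [dg, conjS_conjS_transpose hU, diagSym_val]

lemma conj_diag_add_smul (U : Matrix (Fin n) (Fin n) ℝ) (z h : Fin n → ℝ) (t : ℝ) :
    conjS U (diagSym (z + t • h)) = conjS U (diagSym z) + t • conjS U (diagSym h) := by
  apply Subtype.ext
  have : Matrix.diagonal (z + t • h) = Matrix.diagonal z + t • Matrix.diagonal h := by
    rw [← Matrix.diagonal_smul, Matrix.diagonal_add]; rfl
  simp [conjS_val, diagSym_val, this, Matrix.mul_add, Matrix.add_mul]

/-- From matrices to vectors. -/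
lemma forward_dir {θ : (Fin n → ℝ) → EReal} (hsym : SymmetricFn θ) {γ : ℝ}
    {U : Matrix (Fin n) (Fin n) ℝ} (hU : U * Uᵀ = 1) (z : Fin n → ℝ)
    (h : ProxSingleDirDiff ipM (specFn θ) γ (conjS U (diagSym z))) :
    ProxSingleDirDiff ipV θ γ z := by
  obtain ⟨V, hV, P, hP, hd⟩ := h
  refine ⟨(fun u : Fin n → ℝ => conjS U (diagSym u)) ⁻¹' V,
    (continuous_conj_diag U).continuousAt.preimage_mem_nhds hV,
    fun u => dg U (P (conjS U (diagSym u))), fun u hu => ?_, fun h => ?_⟩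
  · obtain ⟨w, hw, hw'⟩ := prox_link hsym hU u (hP _ hu)
    rw [hw']
    change ({w} : Set (Fin n → ℝ)) = {dg U (P (conjS U (diagSym u)))}
    rw [hw, dg_conj_diag hU]
  · obtain ⟨L, hL⟩ := hd (conjS U (diagSym h))
    refine ⟨dg U L, (((continuous_dg U).tendsto L).comp hL).congr fun t => ?_⟩
    simp only [Function.comp]
    rw [dg_smul_sub, conj_diag_add_smul]

/-- From vectors to matrices, for Lipschitz proximal maps. -/
lemma backward_dir {θ : (Fin n → ℝ) → EReal} (hsym : SymmetricFn θ) {γ : ℝ}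
    {U : Matrix (Fin n) (Fin n) ℝ} (hU : U * Uᵀ = 1) (z : Fin n → ℝ)
    {δ C : ℝ} (hδ : 0 < δ) (P : Sym n → Sym n)
    (hP : ∀ Z, ‖entryMap n (Z - conjS U (diagSym z))‖ < δ →
      proxSet ipM (specFn θ) γ Z = {P Z})
    (hlip : ∀ Z Z', ‖entryMap n (Z - conjS U (diagSym z))‖ < δ →
      ‖entryMap n (Z' - conjS U (diagSym z))‖ < δ →
      ‖entryMap n (P Z - P Z')‖ ≤ C * ‖entryMap n (Z - Z')‖)
    (h : ProxSingleDirDiff ipV θ γ z) :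
    ProxSingleDirDiff ipM (specFn θ) γ (conjS U (diagSym z)) := by
  obtain ⟨V, hV, p, hp, hd⟩ := h
  set Z₀ := conjS U (diagSym z) with hZ₀
  have hcont : Continuous (entryMap n) := entryMap_closedEmbedding.continuous
  have hball : ∀ {f : ℝ → Sym n} {l : Filter ℝ}, Tendsto f l (𝓝 Z₀) →
      ∀ᶠ t in l, ‖entryMap n (f t - Z₀)‖ < δ := by
    intro f l hf
    have h1 : Tendsto (fun t => ‖entryMap n (f t) - entryMap n Z₀‖) l
        (𝓝 ‖entryMap n Z₀ - entryMap n Z₀‖) :=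
      (((hcont.tendsto Z₀).comp hf).sub_const _).norm
    rw [sub_self, norm_zero] at h1
    filter_upwards [h1.eventually (gt_mem_nhds hδ)] with t ht
    rwa [map_sub]
  refine ⟨{Z | ‖entryMap n (Z - Z₀)‖ < δ}, ?_, P, fun Z hZ => hP Z hZ, fun H => ?_⟩
  · apply IsOpen.mem_nhds
    · have : Continuous fun Z : Sym n => ‖entryMap n (Z - Z₀)‖ := by
        simp only [map_sub]; fun_prop
      exact isOpen_lt this continuous_const
    · change ‖entryMap n (Z₀ - Z₀)‖ < δ
      simpa using hδ
  obtain ⟨K, Q, d, hK, hQ, hQz, hdec⟩ := exists_first_order z (conjS Uᵀ H).val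
    (conjS Uᵀ H).property
  obtain ⟨R, hR, hR0, hRd⟩ := exists_orth_curve K hK
  set B : ℝ → Matrix (Fin n) (Fin n) ℝ := fun t => U * R t * Q with hBdef
  have hB : ∀ t, B t * (B t)ᵀ = 1 := fun t => orth_mul (orth_mul hU (hR t)) hQ
  have hB0 : B 0 = U * Q := by simp [hBdef, hR0]
  have hBd : MD B (U * K * Q) := by
    refine (((MD.const U).mul hRd).mul (MD.const Q)).congr_deriv ?_
    simp
  set c : ℝ → Sym n := fun t => conjS (B t) (diagSym (z + t • d)) with hc
  have hc0 : c 0 = Z₀ := by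
    apply Subtype.ext
    simp only [hc, hZ₀, conjS_val, diagSym_val, hB0, zero_smul, add_zero, Matrix.transpose_mul]
    have e : U * Q * Matrix.diagonal z * (Qᵀ * Uᵀ) = U * (Q * Matrix.diagonal z * Qᵀ) * Uᵀ := by
      simp only [Matrix.mul_assoc]
    rw [e, hQz]
  have hcd : Tendsto (fun t : ℝ => t⁻¹ • (c t - Z₀)) (𝓝[>] 0) (𝓝 H) := by
    rw [tendsto_subtype_rng]
    have hz : MD (fun t => Matrix.diagonal (z + t • d)) (Matrix.diagonal d) := by
      apply MD.diagonal
      intro i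
      have := ((hasDerivAt_id (0 : ℝ)).mul_const (d i)).const_add (z i)
      simpa using this.hasDerivWithinAt
    have hM := (hBd.mul hz).mul hBd.transpose
    have hH : (U * K * Q * Matrix.diagonal (z + (0 : ℝ) • d) + B 0 * Matrix.diagonal d) * (B 0)ᵀ +
        B 0 * Matrix.diagonal (z + (0 : ℝ) • d) * (U * K * Q)ᵀ = H.val := by
      have e1 : H.val = U * (conjS Uᵀ H).val * Uᵀ := by
        conv_lhs => rw [← conjS_transpose_conjS hU H]
        rfl
      rw [e1, ← hdec, hB0]
      simp only [zero_smul, add_zero, Matrix.transpose_mul, hK]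
      conv_rhs => rw [← hQz]
      have e2 : Q * Matrix.diagonal z * Qᵀ = Matrix.diagonal z := hQz
      simp only [Matrix.mul_add, Matrix.add_mul, Matrix.mul_sub, Matrix.sub_mul, Matrix.mul_neg,
        Matrix.neg_mul, Matrix.mul_assoc]
      abel
    refine ((hM.congr_deriv hH).tendsto).congr fun t => ?_
    rw [← hc0]
    rfl
  have hct : Tendsto c (𝓝[>] 0) (𝓝 Z₀) := by
    have h1 : Tendsto (fun t : ℝ => t • (t⁻¹ • (c t - Z₀)) + Z₀) (𝓝[>] 0)
        (𝓝 ((0 : ℝ) • H + Z₀)) :=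
      ((tendsto_id.mono_left nhdsWithin_le_nhds).smul hcd).add_const _
    rw [zero_smul, zero_add] at h1
    refine h1.congr' ?_
    filter_upwards [self_mem_nhdsWithin] with t ht
    rw [smul_smul, mul_inv_cancel₀ (ne_of_gt ht), one_smul, sub_add_cancel]
  have hzt : Tendsto (fun t : ℝ => Z₀ + t • H) (𝓝[>] 0) (𝓝 Z₀) := by
    have h1 : Tendsto (fun t : ℝ => Z₀ + t • H) (𝓝 0) (𝓝 (Z₀ + (0 : ℝ) • H)) :=
      (continuous_const.add (continuous_id.smul continuous_const)).tendsto 0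
    rw [zero_smul, add_zero] at h1
    exact h1.mono_left nhdsWithin_le_nhds
  have hut : Tendsto (fun t : ℝ => z + t • d) (𝓝[>] 0) (𝓝 z) := by
    have h1 : Tendsto (fun t : ℝ => z + t • d) (𝓝 0) (𝓝 (z + (0 : ℝ) • d)) :=
      (continuous_const.add (continuous_id.smul continuous_const)).tendsto 0
    rw [zero_smul, add_zero] at h1
    exact h1.mono_left nhdsWithin_le_nhds
  have hPc : ∀ t, ‖entryMap n (c t - Z₀)‖ < δ → z + t • d ∈ V →
      P (c t) = conjS (B t) (diagSym (p (z + t • d))) := by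
    intro t h1 h2
    obtain ⟨w, hw, hw'⟩ := prox_link hsym (hB t) (z + t • d) (hP _ h1)
    rw [hp _ h2, Set.singleton_eq_singleton_iff] at hw'
    rw [hw']; exact hw
  have hP0 : P Z₀ = conjS (B 0) (diagSym (p (z + (0 : ℝ) • d))) := by
    rw [← hPc 0, hc0]
    · rw [hc0]; simpa using hδ
    · simpa using mem_of_mem_nhds hV
  obtain ⟨L, hL⟩ := hd d
  have hpd : MD (fun t => Matrix.diagonal (p (z + t • d))) (Matrix.diagonal L) := by
    apply MD.diagonal
    intro i
    rw [hasDerivWithinAt_iff_tendsto_slope' (by simp)]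
    refine (tendsto_pi_nhds.1 hL i).congr fun t => ?_
    simp [slope_def_field, div_eq_inv_mul]
  have hN := ((hBd.mul hpd).mul hBd.transpose).tendsto
  have hN2 : Tendsto (fun t : ℝ => (t⁻¹ • (P (c t) - P Z₀)).val) (𝓝[>] 0)
      (𝓝 ((U * K * Q * Matrix.diagonal (p (z + (0 : ℝ) • d)) + B 0 * Matrix.diagonal L) * (B 0)ᵀ +
        B 0 * Matrix.diagonal (p (z + (0 : ℝ) • d)) * (U * K * Q)ᵀ)) := by
    refine hN.congr' ?_
    filter_upwards [hball hct, hut.eventually_mem hV] with t h1 h2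
    rw [hPc t h1 h2, hP0]
    rfl
  obtain ⟨L', -, hL'⟩ := exists_sym_limit hN2
  have hzero : Tendsto (fun t : ℝ => t⁻¹ • (P (Z₀ + t • H) - P (c t))) (𝓝[>] 0) (𝓝 0) := by
    rw [entryMap_closedEmbedding.isInducing.tendsto_nhds_iff, map_zero]
    rw [tendsto_zero_iff_norm_tendsto_zero]
    have h1 : Tendsto (fun t : ℝ => C * ‖entryMap n H - entryMap n (t⁻¹ • (c t - Z₀))‖) (𝓝[>] 0)
        (𝓝 (C * ‖entryMap n H - entryMap n H‖)) :=
      ((tendsto_const_nhds.sub ((hcont.tendsto H).comp hcd)).norm).const_mul C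
    rw [sub_self, norm_zero, mul_zero] at h1
    refine squeeze_zero' (Eventually.of_forall fun t => norm_nonneg _) ?_ h1
    filter_upwards [hball hct, hball hzt, self_mem_nhdsWithin] with t h2 h3 h4
    have ht : (0 : ℝ) < t := h4
    simp only [Function.comp]
    have e : entryMap n H - entryMap n (t⁻¹ • (c t - Z₀)) =
        t⁻¹ • entryMap n (Z₀ + t • H - c t) := by
      simp only [map_sub, map_add, map_smul, smul_sub, smul_add, smul_smul,
        inv_mul_cancel₀ ht.ne', one_smul]
      abel
    rw [e, map_smul, norm_smul, norm_smul, ← mul_assoc, mul_comm C, mul_assoc]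
    gcongr
    exact hlip _ _ h3 h2
  refine ⟨0 + L', (hzero.add hL').congr fun t => ?_⟩
  rw [← smul_add, sub_add_sub_cancel]

end FinalProx

theorem prox_dir_diff_spectral {n : ℕ} (θ : (Fin n → ℝ) → EReal)
    (X Y : Sym n) (U : Matrix (Fin n) (Fin n) ℝ) (y : Fin n → ℝ)
    (hsym : SymmetricFn θ) (hLip : LocLipRelDom ipV θ)
    (hlsc : LowerSemicontinuous (specFn θ))
    (hpb : ProxBounded ipM (specFn θ))
    (hY : LimSubgrad ipM (specFn θ) X Y)
    (hpr : ProxRegularAt ipM (specFn θ) X)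
    (hsc : SubdiffContAt ipM (specFn θ) X)
    (hy : LimSubgrad ipV θ (eigval X.val) y)
    (hU : U ∈ eigOrth X.val)
    (hYdec : Y.val = U * Matrix.diagonal y * Uᵀ) :
    (∃ γ₀ > (0 : ℝ), ∀ γ : ℝ, 0 < γ → γ < γ₀ →
        ProxSingleDirDiff ipM (specFn θ) γ (X + γ • Y)) ↔
      (∃ γ₀ > (0 : ℝ), ∀ γ : ℝ, 0 < γ → γ < γ₀ →
        ProxSingleDirDiff ipV θ γ (eigval X.val + γ • y)) := by
  obtain ⟨hUo, hXdec⟩ := hU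
  have hZ : ∀ γ : ℝ, X + γ • Y = conjS U (diagSym (eigval X.val + γ • y)) := by
    intro γ
    have h1 : X = conjS U (diagSym (eigval X.val)) := Subtype.ext hXdec
    have h2 : Y = conjS U (diagSym y) := Subtype.ext hYdec
    rw [conj_diag_add_smul, ← h1, ← h2]
  obtain ⟨γ₁, hγ₁, hmain⟩ := prox_lipschitz ipM_eq entryMap_closedEmbedding hlsc hpb hY (hpr Y hY)
  constructor
  · rintro ⟨γ₀, hγ₀, h⟩
    refine ⟨γ₀, hγ₀, fun γ h0 h1 => ?_⟩
    have := h γ h0 h1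
    rw [hZ] at this
    exact forward_dir hsym hUo _ this
  · rintro ⟨γ₀, hγ₀, h⟩
    refine ⟨min γ₀ γ₁, lt_min hγ₀ hγ₁, fun γ h0 h1 => ?_⟩
    obtain ⟨δ, hδ, C, P, hP, hl⟩ := hmain γ h0 (h1.trans_le (min_le_right _ _))
    rw [hZ] at hP hl ⊢
    exact backward_dir hsym hUo _ hδ P hP hl (h γ h0 (h1.trans_le (min_le_left _ _)))


end SpecPaper
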